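/- (Ellis–Nerurkar, part (b)) Let S be a weakly almost periodic G-flow, let K be a minimal subflow of the Ellis semigroup E(S), and suppose u ∈ K satisfies u ∘ p = p ∘ u = p for all p ∈ K (u is an identity element of K under composition). Then u commutes with every element of E(S): u ∘ q = q ∘ u for all q ∈ E(S). -/

import Mathlib

/-!
For `f : C(S, ℂ)` and `p ∈ E(S)`, weak compactness of the orbit closure of `f` makes `f ∘ p`
continuous (`exists_continuous_comp`).

The identity of `K` gives `u ∘ q ∘ u = q ∘ u` at once, because `q ∘ u ∈ K`. The content of the
theorem is the other equality `u ∘ q ∘ u = u ∘ q`. Testing against `f`, put `h₀ = f ∘ q ∘ u` and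
`h₁ = f ∘ u ∘ q`. Then `h₁ ∘ u = h₀ = h₀ ∘ u`, and since `K` is a group, `h₁ = h₀ ∘ p` for some
`p ∈ E(S)`. So `h₀` and `h₁` are proximal points of a minimal weakly almost periodic flow of
functions, and `eq_of_proximal` shows that they are equal: the group acts by isometries of the sup
norm, and a weakly compact set is fragmented by the norm. Explicitly, if `h₀ s ≠ h₁ s`, then every
pointwise open set `W` meeting the orbit of `h₀` contains some `h₀ ∘ g` and `h₁ ∘ g`, which differ
by the fixed amount `h₀ s - h₁ s` at `g⁻¹ • s`; hence `W` can be split into two open sets, each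
meeting the orbit of `h₀`, at a fixed distance from each other. Iteration gives a binary tree of
open sets. Choosing an orbit point in each, and a weak cluster point along each branch, one obtains
uncountably many uniformly separated functions in the closed span of a countable set, which is
norm separable: a contradiction.
-/

variable (G : Type*) [Group G] (S : Type*) [TopologicalSpace S] [CompactSpace S] [T2Space S]
  [Nonempty S] [MulAction G S] [ContinuousConstSMul G S]

/-- The Ellis semigroup of the `G`-flow `S`: the closure in the product space `S → S`
of the set of action maps `x ↦ g • x`. -/
def EllisSemigroup : Set (S → S) :=
  closure (Set.range fun g : G => fun x : S => g • x)

/-- The action map `x ↦ g • x`, as a continuous self-map of `S`. -/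
def smulCM (g : G) : C(S, S) := ⟨fun x => g • x, continuous_const_smul g⟩

/-- The `G`-flow `S` is weakly almost periodic if for every continuous complex-valued
function `f` on `S`, the `G`-orbit `{x ↦ f (g⁻¹ • x) : g ∈ G}` of `f` is relatively
compact in the weak topology on `C(S, ℂ)`. -/
def IsWAPFlow : Prop :=
  ∀ f : C(S, ℂ),
    IsCompact (closure ((toWeakSpace ℂ C(S, ℂ)) ''
      (Set.range fun g : G => f.comp ((smulCM G S g⁻¹ : C(S, S))))))

/-- A subflow of the Ellis semigroup `E(S)` (as a `G`-flow under `g • p = (x ↦ g • x) ∘ p`):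
a nonempty closed `G`-invariant subset. -/
def IsEllisSubflow (K : Set (S → S)) : Prop :=
  K.Nonempty ∧ IsClosed K ∧ K ⊆ EllisSemigroup G S ∧
    ∀ g : G, ∀ p ∈ K, ((fun x : S => g • x) ∘ p) ∈ K

/-- A minimal subflow of the Ellis semigroup: a subflow not properly containing a subflow. -/
def IsMinimalEllisSubflow (K : Set (S → S)) : Prop :=
  IsEllisSubflow G S K ∧ ∀ K' : Set (S → S), IsEllisSubflow G S K' → K' ⊆ K → K' = K

/-- A left ideal of the Ellis semigroup `(E(S), ∘)`: a nonempty subset `I ⊆ E(S)`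
with `p ∘ q ∈ I` for all `p ∈ E(S)` and `q ∈ I`. -/
def IsEllisLeftIdeal (I : Set (S → S)) : Prop :=
  I.Nonempty ∧ I ⊆ EllisSemigroup G S ∧
    ∀ p ∈ EllisSemigroup G S, ∀ q ∈ I, p ∘ q ∈ I

open Set Filter Topology

set_option linter.unusedSectionVars false

/-! ### Uniformly separated binary trees -/

section Separation

/-- The first `n` values of a binary sequence, latest first. -/
def branchPrefix (σ : ℕ → Bool) : ℕ → List Bool
  | 0 => []
  | n + 1 => σ n :: branchPrefix σ n

lemma branchPrefix_congr {σ τ : ℕ → Bool} {n : ℕ} (h : ∀ m < n, σ m = τ m) :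
    branchPrefix σ n = branchPrefix τ n := by
  induction n with
  | zero => rfl
  | succ n ih =>
    simp only [branchPrefix]
    rw [h n (Nat.lt_succ_self n), ih fun m hm => h m (Nat.lt_succ_of_lt hm)]

/-- A family indexed by the Cantor set in the closed span of a countable set cannot be uniformly
separated, since that span is norm separable. -/
lemma not_separated_of_mem_closure_span {V : Type*} [NormedAddCommGroup V] [NormedSpace ℂ V]
    (x : List Bool → V) (X : (ℕ → Bool) → V)
    (hX : ∀ σ, X σ ∈ closure (Submodule.span ℂ (range x) : Set V)) {δ : ℝ} (hδ : 0 < δ)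
    (hsep : ∀ σ τ, σ ≠ τ → δ ≤ dist (X σ) (X τ)) : False := by
  have hs : TopologicalSpace.IsSeparable (closure (Submodule.span ℂ (range x) : Set V)) :=
    ((countable_range x).isSeparable.span (R := ℂ)).closure
  obtain ⟨D, hD, hDc⟩ := hs
  have hnear : ∀ σ, ∃ d ∈ D, dist (X σ) d < δ / 2 := fun σ =>
    Metric.mem_closure_iff.1 (hDc (hX σ)) _ (half_pos hδ)
  choose d hdD hd using hnear
  have hinj : Function.Injective fun σ => (⟨d σ, hdD σ⟩ : D) := by
    intro σ τ hστ
    by_contra hne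
    have he : d σ = d τ := congrArg Subtype.val hστ
    have h1 := hsep σ τ hne
    have h2 := dist_triangle_right (X σ) (X τ) (d σ)
    have h3 := hd σ
    have h4 := hd τ
    rw [← he] at h4
    linarith
  classical
  have : Countable D := hD
  have hc : Countable (Set ℕ) :=
    (hinj.comp (g := fun σ => (⟨d σ, hdD σ⟩ : D)) (f := fun (A : Set ℕ) n => decide (n ∈ A))
      (by
        intro A B hAB
        ext n
        simpa using congrFun hAB n)).countable
  obtain ⟨e, he⟩ := exists_injective_nat (Set ℕ)
  exact Function.cantor_injective e he

end Separation

/-! ### Functions on a weakly almost periodic flow -/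

section Flow

variable {G S}

lemma continuous_eval_weakSpace :
    Continuous fun F : WeakSpace ℂ C(S, ℂ) =>
      (((toWeakSpace ℂ C(S, ℂ)).symm F : C(S, ℂ)) : S → ℂ) := by
  refine continuous_pi fun s => ?_
  exact WeakBilin.eval_continuous (topDualPairing ℂ C(S, ℂ)).flip
    (ContinuousMap.evalCLM ℂ s : StrongDual ℂ C(S, ℂ))

lemma comp_smul_mem_orbit (f : C(S, ℂ)) (g : G) :
    toWeakSpace ℂ C(S, ℂ) (f.comp (smulCM G S g)) ∈ (toWeakSpace ℂ C(S, ℂ)) ''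
      (range fun g : G => f.comp ((smulCM G S g⁻¹ : C(S, S)))) :=
  ⟨_, ⟨g⁻¹, by simp⟩, rfl⟩

lemma exists_continuous_comp (hwap : IsWAPFlow G S) (f : C(S, ℂ)) {p : S → S}
    (hp : p ∈ EllisSemigroup G S) : ∃ F : C(S, ℂ), (F : S → ℂ) = f ∘ p := by
  have hcl := ((hwap f).image continuous_eval_weakSpace).isClosed
  have hcont : Continuous fun p : S → S => (f ∘ p : S → ℂ) :=
    continuous_pi fun s => f.continuous.comp (continuous_apply s)
  have hsub : EllisSemigroup G S ⊆ (fun p : S → S => (f ∘ p : S → ℂ)) ⁻¹'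
      ((fun F : WeakSpace ℂ C(S, ℂ) => (((toWeakSpace ℂ C(S, ℂ)).symm F : C(S, ℂ)) : S → ℂ)) ''
        closure ((toWeakSpace ℂ C(S, ℂ)) ''
          (range fun g : G => f.comp ((smulCM G S g⁻¹ : C(S, S)))))) := by
    refine closure_minimal ?_ (hcl.preimage hcont)
    rintro _ ⟨g, rfl⟩
    exact ⟨_, subset_closure (comp_smul_mem_orbit f g), rfl⟩
  obtain ⟨F, -, hF⟩ := hsub hp
  exact ⟨_, hF⟩

/-- If `h₁` and `h₀` are identified by `u`, and `h₁` lies in the orbit closure of the weakly almost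
periodic function `h₀`, then they agree: otherwise the orbit of `h₀` carries a binary
tree of pointwise open sets with uniformly separated branches. -/
lemma eq_of_proximal (hwap : IsWAPFlow G S) (h₀ h₁ : C(S, ℂ)) {u p : S → S}
    (hu : u ∈ EllisSemigroup G S) (hp : p ∈ EllisSemigroup G S)
    (h1u : h₁ ∘ u = h₀) (h0u : h₀ ∘ u = h₀) (h1p : (h₁ : S → ℂ) = h₀ ∘ p) : h₁ = h₀ := by
  by_contra hne
  obtain ⟨s₀, hs₀⟩ : ∃ s, h₁ s ≠ h₀ s := by
    by_contra! h
    exact hne (ContinuousMap.ext h)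
  set ε := dist (h₁ s₀) (h₀ s₀)
  have hεpos : 0 < ε := dist_pos.2 hs₀
  let c : Bool → ℂ := fun b => if b then h₁ s₀ else h₀ s₀
  let hh : Bool → C(S, ℂ) := fun b => if b then h₁ else h₀
  have hcont : ∀ f : C(S, ℂ), Continuous fun p : S → S => (f ∘ p : S → ℂ) := fun f =>
    continuous_pi fun s => f.continuous.comp (continuous_apply s)
  have hshift : ∀ g : G, Continuous fun x : S → ℂ => x ∘ fun s : S => g • s := fun g =>
    continuous_pi fun s => continuous_apply _
  let Good : Set (S → ℂ) → Prop := fun W =>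
    IsOpen W ∧ ∃ g : G, (h₀ ∘ fun s : S => g • s) ∈ W
  -- An open set containing a translate of `h₁` contains a translate of `h₀`.
  have hmove : ∀ b (W : Set (S → ℂ)), IsOpen W → ∀ g : G, (hh b ∘ fun s : S => g • s) ∈ W →
      Good W := by
    intro b W hW g hg
    cases b with
    | false => exact ⟨hW, g, hg⟩
    | true =>
      refine ⟨hW, ?_⟩
      have hopen : IsOpen ((fun p : S → S => (h₀ ∘ p) ∘ fun s : S => g • s) ⁻¹' W) :=
        hW.preimage ((hshift g).comp (hcont h₀))
      have hmem : p ∈ (fun p : S → S => (h₀ ∘ p) ∘ fun s : S => g • s) ⁻¹' W := by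
        change (h₀ ∘ p) ∘ _ ∈ W
        rw [← h1p]; exact hg
      obtain ⟨_, hk, ⟨k, rfl⟩⟩ := mem_closure_iff.1 hp _ hopen hmem
      refine ⟨k * g, ?_⟩
      have : (h₀ ∘ fun s : S => (k * g) • s) = (h₀ ∘ fun x => k • x) ∘ fun s : S => g • s := by
        funext s; simp [mul_smul]
      rw [this]; exact hk
  have hstep : ∀ W : {W // Good W}, ∃ s : S, ∃ N : Bool → {W // Good W},
      ∀ b, (N b).1 ⊆ W.1 ∧ ∀ x ∈ (N b).1, dist (x s) (c b) < ε / 3 := by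
    rintro ⟨W, hW, g, hg⟩
    have hopen : ∀ b, IsOpen ((fun p : S → S => (hh b ∘ p) ∘ fun s : S => g • s) ⁻¹' W) :=
      fun b => hW.preimage ((hshift g).comp (hcont _))
    have hmem : ∀ b, u ∈ (fun p : S → S => (hh b ∘ p) ∘ fun s : S => g • s) ⁻¹' W := by
      intro b
      cases b
      · change (h₀ ∘ u) ∘ _ ∈ W
        rw [h0u]; exact hg
      · change (h₁ ∘ u) ∘ _ ∈ W
        rw [h1u]; exact hg
    obtain ⟨_, hk, ⟨k, rfl⟩⟩ := mem_closure_iff.1 hu _ ((hopen true).inter (hopen false))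
      ⟨hmem true, hmem false⟩
    have hkb : ∀ b, (hh b ∘ fun s : S => (k * g) • s) ∈ W := by
      intro b
      have : (hh b ∘ fun s : S => (k * g) • s) = (hh b ∘ fun x => k • x) ∘ fun s : S => g • s := by
        funext s; simp [mul_smul]
      rw [this]
      cases b
      · exact hk.2
      · exact hk.1
    -- At this point the translates by `k * g` take the values `h₁ s₀` and `h₀ s₀`.
    let s : S := (k * g)⁻¹ • s₀
    have hN : ∀ b, Good (W ∩ {x | dist (x s) (c b) < ε / 3}) := by
      intro b
      refine hmove b _ (hW.inter (isOpen_lt (by fun_prop) continuous_const)) (k * g) ⟨hkb b, ?_⟩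
      have : (hh b ∘ fun s : S => (k * g) • s) s = c b := by
        cases b <;> simp only [Function.comp, s, smul_inv_smul] <;> rfl
      simp only [mem_ofPred_eq, this, dist_self]
      positivity
    exact ⟨s, fun b => ⟨_, hN b⟩, fun b => ⟨inter_subset_left, fun x hx => hx.2⟩⟩
  choose pt next hnext using hstep
  let W : List Bool → {W // Good W} := fun t =>
    t.rec ⟨univ, isOpen_univ, 1, trivial⟩ fun b _ w => next w b
  choose γ hγ using fun t => (W t).2.2
  let x : List Bool → C(S, ℂ) := fun t => h₀.comp (smulCM G S (γ t))
  have hxW : ∀ t, (x t : S → ℂ) ∈ (W t).1 := hγ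
  have hanti : ∀ σ, Antitone fun n => (W (branchPrefix σ n)).1 := fun σ =>
    antitone_nat_of_succ_le fun n => (hnext (W (branchPrefix σ n)) (σ n)).1
  have hclus : ∀ σ : ℕ → Bool, ∃ F : WeakSpace ℂ C(S, ℂ),
      MapClusterPt F atTop fun n => toWeakSpace ℂ C(S, ℂ) (x (branchPrefix σ n)) := by
    intro σ
    obtain ⟨F, -, hF⟩ := (hwap h₀).exists_mapClusterPt (f := atTop)
      (u := fun n => toWeakSpace ℂ C(S, ℂ) (x (branchPrefix σ n)))
      (le_principal_iff.2 (mem_map.2 (Eventually.of_forall fun n =>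
        subset_closure (comp_smul_mem_orbit h₀ _))))
    exact ⟨F, hF⟩
  choose F hF using hclus
  let X : (ℕ → Bool) → C(S, ℂ) := fun σ => (toWeakSpace ℂ C(S, ℂ)).symm (F σ)
  have hXpt : ∀ σ n, dist (X σ (pt (W (branchPrefix σ n)))) (c (σ n)) ≤ ε / 3 := by
    intro σ n
    set s := pt (W (branchPrefix σ n))
    have hclosed : IsClosed {y : WeakSpace ℂ C(S, ℂ) |
        dist (((toWeakSpace ℂ C(S, ℂ)).symm y : C(S, ℂ)) s) (c (σ n)) ≤ ε / 3} :=
      isClosed_le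
        ((((continuous_apply s).comp continuous_eval_weakSpace)).dist continuous_const)
        continuous_const
    refine hclosed.mem_of_mapClusterPt (hF σ) ?_
    filter_upwards [eventually_ge_atTop (n + 1)] with m hm
    exact ((hnext (W (branchPrefix σ n)) (σ n)).2 _ (hanti σ hm (hxW _))).le
  refine not_separated_of_mem_closure_span x X ?_ (δ := ε / 3) (by positivity) ?_
  · intro σ
    -- Norm-closed convex sets are weakly closed.
    have hw : F σ ∈ closure ((toWeakSpace ℂ C(S, ℂ)) ''
        (Submodule.span ℂ (range x) : Set C(S, ℂ))) :=
      isClosed_closure.mem_of_mapClusterPt (hF σ) (Eventually.of_forall fun n =>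
        subset_closure ⟨_, Submodule.subset_span ⟨_, rfl⟩, rfl⟩)
    have hconv : Convex ℝ (Submodule.span ℂ (range x) : Set C(S, ℂ)) :=
      ((Submodule.span ℂ (range x)).restrictScalars ℝ).convex
    rw [← hconv.toWeakSpace_closure ℂ] at hw
    obtain ⟨y, hy, hyF⟩ := hw
    have : X σ = y := by simp only [X, ← hyF, LinearEquiv.symm_apply_apply]
    rw [this]; exact hy
  · intro σ τ hne
    have hex : ∃ n, σ n ≠ τ n := Function.ne_iff.1 hne
    classical
    let n := Nat.find hex
    have hn : σ n ≠ τ n := Nat.find_spec hex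
    have hpre : branchPrefix σ n = branchPrefix τ n :=
      branchPrefix_congr fun m hm => not_not.1 (Nat.find_min hex hm)
    have h1 := hXpt σ n
    have h2 := hXpt τ n
    rw [← hpre] at h2
    set s := pt (W (branchPrefix σ n))
    have hcb : ∀ b b' : Bool, b ≠ b' → dist (c b) (c b') = ε := by
      rintro (_ | _) (_ | _) hbb
      · exact absurd rfl hbb
      · exact dist_comm _ _
      · rfl
      · exact absurd rfl hbb
    have hcc := hcb _ _ hn
    have h3 := dist_triangle4 (c (σ n)) (X σ s) (X τ s) (c (τ n))
    rw [dist_comm (c (σ n)) (X σ s)] at h3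
    have h4 := ContinuousMap.dist_apply_le_dist (f := X σ) (g := X τ) s
    linarith

/-! ### Subflows of the Ellis semigroup -/

lemma comp_mem_of_invariant {K : Set (S → S)} (hK : IsEllisSubflow G S K) {p k : S → S}
    (hp : p ∈ EllisSemigroup G S) (hk : k ∈ K) : p ∘ k ∈ K := by
  have hcont : Continuous fun p : S → S => p ∘ k := continuous_pi fun s => continuous_apply _
  have hsub : EllisSemigroup G S ⊆ (fun p : S → S => p ∘ k) ⁻¹' K := by
    refine closure_minimal ?_ (hK.2.1.preimage hcont)
    rintro _ ⟨g, rfl⟩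
    exact hK.2.2.2 g k hk
  exact hsub hp

lemma isEllisSubflow_self : IsEllisSubflow G S (EllisSemigroup G S) := by
  refine ⟨⟨_, subset_closure ⟨1, rfl⟩⟩, isClosed_closure, subset_rfl, fun g p hp => ?_⟩
  have hcont : Continuous fun p : S → S => (fun x : S => g • x) ∘ p :=
    continuous_pi fun s => (continuous_apply s).const_smul g
  have hsub : EllisSemigroup G S ⊆
      (fun p : S → S => (fun x : S => g • x) ∘ p) ⁻¹' EllisSemigroup G S := by
    refine closure_minimal ?_ (isClosed_closure.preimage hcont)
    rintro _ ⟨k, rfl⟩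
    exact subset_closure ⟨g * k, by funext s; simp [mul_smul]⟩
  exact hsub hp

/-- Minimality of `K` says that `E(S) ∘ a = K` for each `a ∈ K`. -/
lemma exists_comp_eq {K : Set (S → S)} (hK : IsMinimalEllisSubflow G S K) {a b : S → S}
    (ha : a ∈ K) (hb : b ∈ K) : ∃ r ∈ EllisSemigroup G S, r ∘ a = b := by
  have hcont : Continuous fun p : S → S => p ∘ a := continuous_pi fun s => continuous_apply _
  have hsub : (fun p : S → S => p ∘ a) '' EllisSemigroup G S ⊆ K := by
    rintro _ ⟨p, hp, rfl⟩
    exact comp_mem_of_invariant hK.1 hp ha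
  have heq := hK.2 ((fun p : S → S => p ∘ a) '' EllisSemigroup G S)
    ⟨isEllisSubflow_self.1.image _, ((isClosed_closure.isCompact).image hcont).isClosed,
      hsub.trans hK.1.2.2.1, by
        rintro g _ ⟨p, hp, rfl⟩
        exact ⟨_, isEllisSubflow_self.2.2.2 g p hp, rfl⟩⟩ hsub
  rw [← heq] at hb
  exact hb

end Flow

/-- **Ellis–Nerurkar, part (b).** If `S` is a weakly almost periodic `G`-flow, `K` is a
minimal subflow of the Ellis semigroup `E(S)`, and `u ∈ K` is an identity element of `K`
under composition, then `u` commutes with every element of `E(S)`. -/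
theorem ellis_nerurkar_b (hwap : IsWAPFlow G S) (K : Set (S → S))
    (hK : IsMinimalEllisSubflow G S K) (u : S → S) (hu : u ∈ K)
    (hid : ∀ p ∈ K, u ∘ p = p ∧ p ∘ u = p) :
    ∀ q ∈ EllisSemigroup G S, u ∘ q = q ∘ u := by
  intro q hq
  have huE := hK.1.2.2.1 hu
  have hqu : q ∘ u ∈ K := comp_mem_of_invariant hK.1 hq hu
  -- In the monoid `K` every element has a left inverse, so `q ∘ u` has a two-sided inverse `b`.
  have hleft : ∀ a ∈ K, ∃ b ∈ K, b ∘ a = u := by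
    intro a ha
    obtain ⟨r, hr, hra⟩ := exists_comp_eq hK ha hu
    refine ⟨r ∘ u, comp_mem_of_invariant hK.1 hr hu, ?_⟩
    rw [Function.comp_assoc, (hid a ha).1, hra]
  obtain ⟨b, hb, hba⟩ := hleft _ hqu
  obtain ⟨d, hd, hdb⟩ := hleft b hb
  have hinv : (q ∘ u) ∘ b = u := by
    have : d = q ∘ u := by
      calc d = d ∘ u := ((hid d hd).2).symm
        _ = (d ∘ b) ∘ (q ∘ u) := by rw [Function.comp_assoc, hba]
        _ = q ∘ u := by rw [hdb, (hid _ hqu).1]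
    rw [← this, hdb]
  have key : ∀ f : C(S, ℂ), f ∘ u ∘ q = f ∘ q ∘ u := by
    intro f
    have huq : u ∘ q ∈ EllisSemigroup G S := comp_mem_of_invariant isEllisSubflow_self huE hq
    obtain ⟨h₀, hh₀⟩ := exists_continuous_comp hwap f (hK.1.2.2.1 hqu)
    obtain ⟨h₁, hh₁⟩ := exists_continuous_comp hwap f huq
    have hp : b ∘ q ∈ EllisSemigroup G S :=
      comp_mem_of_invariant isEllisSubflow_self (hK.1.2.2.1 hb) hq
    have := eq_of_proximal hwap h₀ h₁ huE hp
      (by rw [hh₁, hh₀, Function.comp_assoc, Function.comp_assoc, (hid _ hqu).1])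
      (by rw [hh₀, Function.comp_assoc, (hid _ hqu).2])
      (by rw [hh₁, hh₀, Function.comp_assoc, ← Function.comp_assoc (q ∘ u), hinv])
    rw [← hh₁, ← hh₀, this]
  funext s
  by_contra hne
  -- Continuous functions separate the points of a compact Hausdorff space.
  obtain ⟨φ, h0, h1, -⟩ := exists_continuous_zero_one_of_isClosed
    (isClosed_singleton (x := (u ∘ q) s)) (isClosed_singleton (x := (q ∘ u) s))
    (disjoint_singleton.2 hne)
  have hk := congrFun (key ⟨fun x => (φ x : ℂ), by fun_prop⟩) s
  have e0 : φ (u (q s)) = 0 := h0 rfl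
  have e1 : φ (q (u s)) = 1 := h1 rfl
  simp [e0, e1] at hk
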